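/- Square-root form of the PAC-Bayes bound (algebraic step for Equation (4)): for all real numbers p̂, p, ε with 0 ≤ p̂ ≤ p < 1, p > 0, and ε ≥ 0, if kl(p̂ ‖ p) ≤ ε then p − p̂ ≤ √(2·p·ε). -/

import Mathlib

/-- The binary Kullback–Leibler divergence between Bernoulli parameters `q` and `q'`
(with the convention `0 * log 0 = 0`, which holds automatically since `Real.log 0 = 0`). -/
noncomputable def binKl (q q' : ℝ) : ℝ :=
  q * Real.log (q / q') + (1 - q) * Real.log ((1 - q) / (1 - q'))

/-! As an `f`-divergence, `kl(q ‖ p) = p φ(q/p) + (1 - p) φ((1 - q)/(1 - p))` with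
`φ x = x log x + 1 - x` (`InformationTheory.klFun`). The second term is nonnegative. On `[0, 1]`,
the inequality `sinh t ≤ t` for `t = log x ≤ 0` improves `φ ≥ 0` to `φ x ≥ (1 - x)² / 2`, so the
first term is at least `(p - q)² / (2p)`. -/

open InformationTheory (klFun klFun_apply klFun_nonneg klFun_zero)

theorem sq_one_sub_div_two_le_klFun {x : ℝ} (hx₀ : 0 ≤ x) (hx₁ : x ≤ 1) :
    (1 - x) ^ 2 / 2 ≤ klFun x := by
  rcases hx₀.eq_or_lt with rfl | hx
  · norm_num [klFun_zero]
  have sinh_log_le : (x - x⁻¹) / 2 ≤ Real.log x := by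
    rw [← Real.sinh_log hx]
    exact Real.sinh_le_self_iff.2 (Real.log_nonpos hx₀ hx₁)
  calc
    (1 - x) ^ 2 / 2 = x * ((x - x⁻¹) / 2) + 1 - x := by field_simp; ring
    _ ≤ x * Real.log x + 1 - x := by gcongr
    _ = klFun x := (klFun_apply x).symm

theorem binKl_eq_mul_klFun_add_mul_klFun (q : ℝ) {p : ℝ} (hp₀ : p ≠ 0) (hp₁ : p ≠ 1) :
    binKl q p = p * klFun (q / p) + (1 - p) * klFun ((1 - q) / (1 - p)) := by
  have one_sub_ne_zero : 1 - p ≠ 0 := sub_ne_zero.2 hp₁.symm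
  rw [binKl, klFun_apply, klFun_apply]
  field_simp
  ring

theorem sq_sub_div_two_mul_le_binKl {q p : ℝ} (hq : 0 ≤ q) (hqp : q ≤ p) (hp₀ : 0 < p)
    (hp₁ : p < 1) : (p - q) ^ 2 / (2 * p) ≤ binKl q p := by
  have success_term : (1 - q / p) ^ 2 / 2 ≤ klFun (q / p) :=
    sq_one_sub_div_two_le_klFun (div_nonneg hq hp₀.le) ((div_le_one hp₀).2 hqp)
  have failure_term : 0 ≤ (1 - p) * klFun ((1 - q) / (1 - p)) :=
    mul_nonneg (by linarith) (klFun_nonneg (div_nonneg (by linarith) (by linarith)))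
  calc
    (p - q) ^ 2 / (2 * p) = p * ((1 - q / p) ^ 2 / 2) := by field_simp
    _ ≤ p * klFun (q / p) := by gcongr
    _ ≤ p * klFun (q / p) + (1 - p) * klFun ((1 - q) / (1 - p)) :=
      le_add_of_nonneg_right failure_term
    _ = binKl q p := (binKl_eq_mul_klFun_add_mul_klFun q hp₀.ne' hp₁.ne).symm

/-- Square-root form of the PAC-Bayes bound: for `0 ≤ phat ≤ p < 1`, `p > 0`, `ε ≥ 0`,
if `kl(phat ‖ p) ≤ ε` then `p − phat ≤ √(2·p·ε)`. -/
theorem sqrt_form_of_binKl_le (phat p ε : ℝ) (h0 : 0 ≤ phat) (hle : phat ≤ p)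
    (hp1 : p < 1) (hp : 0 < p) (hε : 0 ≤ ε) (hkl : binKl phat p ≤ ε) :
    p - phat ≤ Real.sqrt (2 * p * ε) := by
  have sq_div_le : (p - phat) ^ 2 / (2 * p) ≤ ε :=
    (sq_sub_div_two_mul_le_binKl h0 hle hp hp1).trans hkl
  exact Real.le_sqrt_of_sq_le ((div_le_iff₀' (by positivity)).1 sq_div_le)
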